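/- arXiv:1706.08175 — 3 statements merged into one kernel-verified Lean document; each statement's English description precedes it below -/
import Mathlib

section
/- Let C be an n×m integer matrix, ℓ a prime, and d = v_ℓ(|Ab(C)|), where Ab(C) is the torsion part of ℤ^n/C(ℤ^m). For j ≥ 0 let M_j = { x ∈ ℤ_ℓ^m : Cx ∈ ℓ^j ℤ_ℓ^n } and let \bar{M_j} denote its image in 𝔽_ℓ^m. Suppose there are integers 0 < t_1 < ⋯ < t_j and s_1 > s_2 > ⋯ > s_j > s_{j+1} = dim(\bar{ker C}) such that dim(\bar{M}_{t_i}) ≥ s_i for all i and d = Σ_{i=1}^{j} (s_i − s_{i+1}) t_i. Then the ℓ-elementary divisor multiplicities of C satisfy e_0 = m − s_1, e_{t_i} = s_i − s_{i+1}, and e_a = 0 for every a ∉ {0, t_1, …, t_j}. -/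
open Matrix

noncomputable def redBar (p m : ℕ) [Fact p.Prime] (S : Set (Fin m → ℤ_[p])) :
    Submodule (ZMod p) (Fin m → ZMod p) :=
  Submodule.span (ZMod p)
    ((fun x : Fin m → ℤ_[p] => fun i => PadicInt.toZMod (x i)) '' S)

def Mset (p n m : ℕ) [Fact p.Prime] (C : Matrix (Fin n) (Fin m) ℤ) (j : ℕ) :
    Set (Fin m → ℤ_[p]) :=
  {x | ∀ i, (p : ℤ_[p]) ^ j ∣ ((C.map (Int.cast : ℤ → ℤ_[p])) *ᵥ x) i}

noncomputable def elemDivCount (p : ℕ) {n m : ℕ} (D : Matrix (Fin n) (Fin m) ℤ) (a : ℕ) : ℕ :=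
  Nat.card {ij : Fin n × Fin m // (ij.1 : ℕ) = (ij.2 : ℕ) ∧ D ij.1 ij.2 ≠ 0 ∧
      (p : ℤ) ^ a ∣ D ij.1 ij.2 ∧ ¬ (p : ℤ) ^ (a + 1) ∣ D ij.1 ij.2}

/-- `Ab(C)`: the torsion part of `ℤ^n / C(ℤ^m)`. -/
noncomputable def AbC {n m : ℕ} (C : Matrix (Fin n) (Fin m) ℤ) :=
  Submodule.torsion ℤ ((Fin n → ℤ) ⧸ LinearMap.range C.mulVecLin)

theorem comb {ι : Type*} (R : Finset ι) (v : ι → ℕ) : ∀ (J : ℕ) (t : Fin J → ℕ) (s : Fin (J+1) → ℕ) (b : ℕ)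
    (_ : ∀ i, b < t i) (_ : StrictMono t)
    (_ : ∀ i : Fin J, s i.castSucc ≤ s (Fin.last J) + (R.filter (fun k => t i ≤ v k)).card),
    (∑ i : Fin J, ((s i.castSucc : ℤ) - s i.succ) * ((t i : ℤ) - b) ≤ ∑ k ∈ R, ((v k - b : ℕ) : ℤ)) ∧
    (∑ i : Fin J, ((s i.castSucc : ℤ) - s i.succ) * ((t i : ℤ) - b) = ∑ k ∈ R, ((v k - b : ℕ) : ℤ) →
      s 0 = s (Fin.last J) + (R.filter (fun k => b < v k)).card ∧
      (∀ i : Fin J, s i.castSucc = s (Fin.last J) + (R.filter (fun k => t i ≤ v k)).card ∧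
        s i.succ = s (Fin.last J) + (R.filter (fun k => t i < v k)).card) ∧
      ∀ k ∈ R, v k ≤ b ∨ ∃ i, v k = t i) := by
  intro J
  induction J with
  | zero =>
    intro t s b _ _ _
    refine ⟨by simpa using Finset.sum_nonneg (fun k _ => by positivity), ?_⟩
    intro h
    have h2 : ∀ k ∈ R, v k ≤ b := by
      simp only [Finset.univ_eq_empty, Finset.sum_empty] at h
      have := (Finset.sum_eq_zero_iff_of_nonneg (fun k _ => by positivity)).1 h.symm
      intro k hk
      have := this k hk
      omega
    refine ⟨?_, fun i => i.elim0, fun k hk => Or.inl (h2 k hk)⟩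
    have : R.filter (fun k => b < v k) = ∅ := by
      apply Finset.filter_eq_empty_iff.2
      intro k hk; have := h2 k hk; omega
    rw [this]; simp
  | succ J ih =>
    intro t s b hb ht hs
    have IH := ih (fun i => t i.succ) (fun i => s i.succ) (t 0)
      (fun i => ht (Fin.succ_pos i)) (fun i j hij => ht (Fin.succ_lt_succ_iff.2 hij))
      (fun i => by simpa using hs i.succ)
    obtain ⟨I1, I2⟩ := IH
    have tel : ∀ (J : ℕ) (s : Fin (J+1) → ℕ), ∑ i : Fin J, ((s i.castSucc : ℤ) - s i.succ) = s 0 - s (Fin.last J) := by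
      intro J
      induction J with
      | zero => intro s; simp
      | succ J ih =>
        intro s
        rw [Fin.sum_univ_succ]
        have := ih (fun i => s i.succ)
        simp only [Fin.succ_castSucc, Fin.succ_last, Fin.castSucc_zero] at this ⊢
        rw [this]; simp
    have hpt : ∀ k ∈ R, (if t 0 ≤ v k then ((t 0 : ℤ) - b) else 0) + ((v k - t 0 : ℕ) : ℤ) ≤ ((v k - b : ℕ) : ℤ) := by
      intro k _
      have := hb 0
      split_ifs <;> omega
    have hA := Finset.sum_le_sum hpt
    have hB : ∑ k ∈ R, ((if t 0 ≤ v k then ((t 0 : ℤ) - b) else 0) + ((v k - t 0 : ℕ) : ℤ))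
       = (R.filter (fun k => t 0 ≤ v k)).card * ((t 0 : ℤ) - b) + ∑ k ∈ R, ((v k - t 0 : ℕ) : ℤ) := by
      rw [Finset.sum_add_distrib, ← Finset.sum_filter, Finset.sum_const, nsmul_eq_mul]
    have hR : ∑ i : Fin (J+1), ((s i.castSucc : ℤ) - s i.succ) * ((t i : ℤ) - b)
       = ((s 0 : ℤ) - s (Fin.last (J+1))) * ((t 0 : ℤ) - b)
         + ∑ i : Fin J, ((s i.castSucc.succ : ℤ) - s i.succ.succ) * ((t i.succ : ℤ) - t 0) := by
      have e : ∀ i : Fin (J+1), ((s i.castSucc : ℤ) - s i.succ) * ((t i : ℤ) - b)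
        = ((s i.castSucc : ℤ) - s i.succ) * ((t 0 : ℤ) - b) + ((s i.castSucc : ℤ) - s i.succ) * ((t i : ℤ) - t 0) := by
        intro i; ring
      rw [Finset.sum_congr rfl (fun i _ => e i), Finset.sum_add_distrib, ← Finset.sum_mul, tel]
      congr 1
      rw [Fin.sum_univ_succ]
      simp
    have h0 : (s 0 : ℤ) ≤ s (Fin.last (J+1)) + (R.filter (fun k => t 0 ≤ v k)).card := by
      exact_mod_cast hs 0
    have hb0 : (0:ℤ) < (t 0 : ℤ) - b := by have := hb 0; omega
    have h1 : ((s 0 : ℤ) - s (Fin.last (J+1))) * ((t 0 : ℤ) - b) ≤ (R.filter (fun k => t 0 ≤ v k)).card * ((t 0 : ℤ) - b) :=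
      mul_le_mul_of_nonneg_right (by linarith) hb0.le
    refine ⟨by rw [hR]; linarith, ?_⟩
    intro heq
    rw [hR] at heq
    obtain ⟨J1, J2, J3⟩ := I2 (by linarith)
    have hc : (s 0 : ℤ) - s (Fin.last (J+1)) = (R.filter (fun k => t 0 ≤ v k)).card := by
      apply mul_right_cancel₀ hb0.ne'
      linarith
    have hp := (Finset.sum_eq_sum_iff_of_le hpt).1 (by linarith)
    have hp' : ∀ k ∈ R, v k ≤ b ∨ t 0 ≤ v k := by
      intro k hk
      have := hp k hk
      split_ifs at this <;> omega
    have hf : R.filter (fun k => b < v k) = R.filter (fun k => t 0 ≤ v k) := by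
      apply Finset.filter_congr
      intro k hk
      have := hp' k hk
      have := hb 0
      omega
    refine ⟨by rw [hf]; omega, ?_, ?_⟩
    · intro i
      refine Fin.cases ⟨?_, ?_⟩ (fun i => ?_) i
      · simp only [Fin.castSucc_zero]; omega
      · simpa using J1
      · simpa using J2 i
    · intro k hk
      rcases hp' k hk with h | h
      · exact Or.inl h
      · right
        rcases J3 k hk with h' | ⟨i, hi⟩
        · exact ⟨0, le_antisymm h' h⟩
        · exact ⟨i.succ, hi⟩

def GG {n m : ℕ} (D : Matrix (Fin n) (Fin m) ℤ) (k : ℕ) : ℤ :=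
  if h : k < n ∧ k < m then D ⟨k, h.1⟩ ⟨k, h.2⟩ else 0

def RR {n m : ℕ} (D : Matrix (Fin n) (Fin m) ℤ) : Finset ℕ :=
  (Finset.range n).filter (fun k => GG D k ≠ 0)

theorem GG_lt {n m : ℕ} (D : Matrix (Fin n) (Fin m) ℤ) (k : ℕ) (h : GG D k ≠ 0) : k < n ∧ k < m := by
  by_contra h'
  exact h (by simp [GG, h'])

theorem RR_eq {n m : ℕ} (D : Matrix (Fin n) (Fin m) ℤ) :
    RR D = (Finset.range m).filter (fun k => GG D k ≠ 0) := by
  ext k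
  simp only [RR, Finset.mem_filter, Finset.mem_range]
  constructor
  · rintro ⟨_, h⟩; exact ⟨(GG_lt D k h).2, h⟩
  · rintro ⟨_, h⟩; exact ⟨(GG_lt D k h).1, h⟩

theorem D_mulVec {A : Type*} [CommRing A] {n m : ℕ} (D : Matrix (Fin n) (Fin m) ℤ)
    (hdiag : ∀ (i : Fin n) (j : Fin m), ((i : ℕ) ≠ (j : ℕ)) → D i j = 0) (y : Fin m → A) (i : Fin n) :
    (D.map (Int.cast : ℤ → A) *ᵥ y) i = if h : (i:ℕ) < m then (GG D i : A) * y ⟨i, h⟩ else 0 := by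
  simp only [Matrix.mulVec, dotProduct, Matrix.map_apply]
  split_ifs with h
  · rw [Finset.sum_eq_single ⟨i, h⟩]
    · simp [GG, h]
    · intro j _ hj
      rw [hdiag i j (fun e => hj (Fin.ext e.symm))]; simp
    · simp
  · apply Finset.sum_eq_zero
    intro j _
    rw [hdiag i j (fun e => h (e ▸ j.2))]; simp

theorem elem_eq (p : ℕ) [Fact p.Prime] {n m : ℕ} (D : Matrix (Fin n) (Fin m) ℤ) (a : ℕ) :
    elemDivCount p D a = ((RR D).filter (fun k => padicValInt p (GG D k) = a)).card := by
  have key : ∀ i : Fin n, ∀ j : Fin m, (i : ℕ) = (j : ℕ) → D i j = GG D i := by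
    intro i j hij
    have hi : (i : ℕ) < m := hij ▸ j.2
    have : j = ⟨i, hi⟩ := Fin.ext hij.symm
    subst this
    simp [GG, hi]
  have key2 : ∀ x : ℤ, x ≠ 0 → (((p : ℤ) ^ a ∣ x ∧ ¬ (p : ℤ) ^ (a + 1) ∣ x) ↔ padicValInt p x = a) := by
    intro x hx
    rw [padicValInt_dvd_iff, padicValInt_dvd_iff]
    simp only [hx, false_or]
    omega
  rw [elemDivCount, ← Fintype.card_coe, ← Nat.card_eq_fintype_card]
  apply Nat.card_congr
  refine Equiv.ofBijective (fun x => ⟨x.1.1, ?_⟩) ⟨?_, ?_⟩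
  · obtain ⟨⟨i, j⟩, h1, h2, h3⟩ := x
    simp only at h1 h2 h3
    rw [key i j h1] at h2 h3
    simp only [RR, Finset.mem_filter, Finset.mem_range]
    exact ⟨⟨i.2, h2⟩, (key2 _ h2).1 h3⟩
  · rintro ⟨⟨i, j⟩, h1, h2⟩ ⟨⟨i', j'⟩, h1', h2'⟩ h
    simp only [Subtype.mk.injEq] at h h1 h1'
    have e1 : i = i' := Fin.ext h
    have e2 : j = j' := Fin.ext (by omega)
    subst e1 e2
    rfl
  · rintro ⟨k, hk⟩
    simp only [RR, Finset.mem_filter, Finset.mem_range] at hk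
    have hl := GG_lt D k hk.1.2
    refine ⟨⟨(⟨k, hl.1⟩, ⟨k, hl.2⟩), rfl, ?_⟩, rfl⟩
    simp only
    rw [key ⟨k, hl.1⟩ ⟨k, hl.2⟩ rfl]
    exact ⟨hk.1.2, (key2 _ hk.1.2).2 hk.2⟩

theorem dvd_mulVec {A : Type*} [CommRing A] {n m : ℕ} (M : Matrix (Fin n) (Fin m) A) (c : A)
    (w : Fin m → A) (h : ∀ i, c ∣ w i) (i : Fin n) : c ∣ (M *ᵥ w) i := by
  simp only [Matrix.mulVec, dotProduct]
  exact Finset.dvd_sum (fun j _ => Dvd.dvd.mul_left (h j) _)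

theorem finrank_redBar_diag (p m : ℕ) [Fact p.Prime] (S : Set (Fin m → ℤ_[p])) (K : Finset (Fin m))
    (h1 : ∀ y ∈ S, ∀ k, k ∉ K → (p : ℤ_[p]) ∣ y k) (h2 : ∀ k ∈ K, Pi.single k 1 ∈ S) :
    Module.finrank (ZMod p) (redBar p m S) = K.card := by
  have : redBar p m S = Submodule.span (ZMod p) (Set.range (fun k : K => (Pi.single k.1 1 : Fin m → ZMod p))) := by
    apply le_antisymm
    · apply Submodule.span_le.2
      rintro _ ⟨y, hy, rfl⟩
      have e : (fun i => PadicInt.toZMod (y i) : Fin m → ZMod p)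
          = ∑ k : K, PadicInt.toZMod (y k) • (Pi.single k.1 1 : Fin m → ZMod p) := by
        rw [Finset.sum_coe_sort K (fun k => PadicInt.toZMod (y k) • (Pi.single k 1 : Fin m → ZMod p))]
        ext i
        simp only [Finset.sum_apply, Pi.smul_apply, smul_eq_mul, Pi.single_apply, mul_ite, mul_one, mul_zero,
          Finset.sum_ite_eq]
        split_ifs with hi
        · rfl
        · have := h1 y hy i hi
          obtain ⟨z, hz⟩ := this
          rw [hz]; simp
      simp only [SetLike.mem_coe]
      rw [e]
      exact Submodule.sum_mem _ (fun k _ => Submodule.smul_mem _ _ (Submodule.subset_span ⟨k, rfl⟩))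
    · apply Submodule.span_le.2
      rintro _ ⟨k, rfl⟩
      apply Submodule.subset_span
      refine ⟨_, h2 k.1 k.2, ?_⟩
      ext i
      by_cases h : i = k.1
      · subst h; simp
      · simp [h]
  rw [this, finrank_span_eq_card]
  · simp
  · have := (Pi.basisFun (ZMod p) (Fin m)).linearIndependent.comp (fun k : K => k.1) Subtype.val_injective
    convert this using 1
    ext k; simp

theorem finrank_redBar_image (p m : ℕ) [Fact p.Prime] (Q Q' : Matrix (Fin m) (Fin m) ℤ) (hQ : Q' * Q = 1)
    (S : Set (Fin m → ℤ_[p])) :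
    Module.finrank (ZMod p) (redBar p m ((fun y => Q.map (Int.cast : ℤ → ℤ_[p]) *ᵥ y) '' S))
     = Module.finrank (ZMod p) (redBar p m S) := by
  have hinj : Function.Injective (Q.map (Int.cast : ℤ → ZMod p)).mulVecLin := by
    have h : Q'.map (Int.cast : ℤ → ZMod p) * Q.map (Int.cast : ℤ → ZMod p) = 1 := by
      have h1 : (Q' * Q).map (Int.cast : ℤ → ZMod p)
          = Q'.map (Int.cast : ℤ → ZMod p) * Q.map (Int.cast : ℤ → ZMod p) :=
        Matrix.map_mul (f := Int.castRingHom (ZMod p))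
      rw [← h1, hQ]; simp
    intro x y hxy
    have := congrArg (fun z => Q'.map (Int.cast : ℤ → ZMod p) *ᵥ z) hxy
    simpa [h] using this
  rw [LinearEquiv.finrank_eq (Submodule.equivMapOfInjective _ hinj (redBar p m S))]
  have : redBar p m ((fun y => Q.map (Int.cast : ℤ → ℤ_[p]) *ᵥ y) '' S)
     = Submodule.map (Q.map (Int.cast : ℤ → ZMod p)).mulVecLin (redBar p m S) := by
    simp only [redBar]
    rw [Submodule.map_span, Set.image_image, Set.image_image]
    congr 1
    apply Set.image_congr
    intro y _
    ext i
    simp [Matrix.mulVec, dotProduct]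
  rw [this]

theorem finrank_dvd (p n m : ℕ) [Fact p.Prime] (C : Matrix (Fin n) (Fin m) ℤ)
    (P P' : Matrix (Fin n) (Fin n) ℤ) (Q Q' : Matrix (Fin m) (Fin m) ℤ)
    (hP : P' * P = 1) (hQ : Q' * Q = 1) (hQ2 : Q * Q' = 1)
    (hdiag : ∀ (i : Fin n) (j : Fin m), ((i : ℕ) ≠ (j : ℕ)) → (P * C * Q) i j = 0)
    (c : ℤ_[p]) (hc : ∀ a y : ℤ_[p], ¬ c ∣ a → c ∣ a * y → (p : ℤ_[p]) ∣ y)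
    (K : Finset (Fin m)) (hK : ∀ k : Fin m, k ∈ K ↔ c ∣ (GG (P * C * Q) k : ℤ_[p])) :
    Module.finrank (ZMod p) (redBar p m {x | ∀ i, c ∣ ((C.map (Int.cast : ℤ → ℤ_[p])) *ᵥ x) i}) = K.card := by
  set D := P * C * Q with hD
  have cm : ∀ {a b c : ℕ} (A : Matrix (Fin a) (Fin b) ℤ) (B : Matrix (Fin b) (Fin c) ℤ),
     (A * B).map (Int.cast : ℤ → ℤ_[p]) = A.map (Int.cast : ℤ → ℤ_[p]) * B.map (Int.cast : ℤ → ℤ_[p]) := by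
    intro a b c A B
    exact Matrix.map_mul (f := Int.castRingHom ℤ_[p])
  have c1 : ∀ {a : ℕ}, (1 : Matrix (Fin a) (Fin a) ℤ).map (Int.cast : ℤ → ℤ_[p]) = 1 := by
    intro a; simp
  have hset : {x | ∀ i, c ∣ ((C.map (Int.cast : ℤ → ℤ_[p])) *ᵥ x) i}
    = (fun y => Q.map (Int.cast : ℤ → ℤ_[p]) *ᵥ y) '' {y | ∀ i, c ∣ (D.map (Int.cast : ℤ → ℤ_[p]) *ᵥ y) i} := by
    ext x
    simp only [Set.mem_ofPred_eq, Set.mem_image]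
    constructor
    · intro h
      refine ⟨Q'.map (Int.cast : ℤ → ℤ_[p]) *ᵥ x, ?_, ?_⟩
      · rw [Matrix.mulVec_mulVec, ← cm, hD, Matrix.mul_assoc, hQ2, Matrix.mul_one, cm, ← Matrix.mulVec_mulVec]
        exact dvd_mulVec _ _ _ h
      · rw [Matrix.mulVec_mulVec, ← cm, hQ2, c1, Matrix.one_mulVec]
    · rintro ⟨y, hy, rfl⟩
      have := dvd_mulVec (P'.map (Int.cast : ℤ → ℤ_[p])) _ _ hy
      rw [Matrix.mulVec_mulVec, ← cm, hD, ← Matrix.mul_assoc, ← Matrix.mul_assoc, hP, Matrix.one_mul] at this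
      rwa [Matrix.mulVec_mulVec, ← cm]
  rw [hset, finrank_redBar_image p m Q Q' hQ]
  apply finrank_redBar_diag
  · intro y hy k hk
    have hk' : ¬ c ∣ (GG D k : ℤ_[p]) := fun h => hk ((hK k).2 h)
    have h0 : GG D k ≠ 0 := by
      intro h; apply hk'; rw [h]; simp
    have := hy ⟨k, (GG_lt D k h0).1⟩
    rw [D_mulVec D hdiag] at this
    simp only [Fin.is_lt, dite_true] at this
    exact hc _ _ hk' this
  · intro k hk i
    have hk' := (hK k).1 hk
    rw [D_mulVec D hdiag]
    split_ifs with h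
    · by_cases e : (i : ℕ) = k
      · apply Dvd.dvd.mul_right; rw [e]; exact hk'
      · have : (⟨i, h⟩ : Fin m) ≠ k := fun e' => e (by rw [← e'])
        simp [this]
    · simp

theorem fin_card (m : ℕ) (q : ℕ → Prop) [DecidablePred q] :
    (Finset.univ.filter (fun k : Fin m => q k)).card = ((Finset.range m).filter q).card := by
  rw [Finset.card_filter, Finset.card_filter, Finset.sum_range]

theorem mem_range_iff {n m : ℕ} (C : Matrix (Fin n) (Fin m) ℤ)
    (P P' : Matrix (Fin n) (Fin n) ℤ) (Q Q' : Matrix (Fin m) (Fin m) ℤ)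
    (hP : P' * P = 1) (hQ2 : Q * Q' = 1)
    (hdiag : ∀ (i : Fin n) (j : Fin m), ((i : ℕ) ≠ (j : ℕ)) → (P * C * Q) i j = 0)
    (w : Fin n → ℤ) : w ∈ LinearMap.range C.mulVecLin ↔ ∀ i : Fin n, GG (P * C * Q) i ∣ (P *ᵥ w) i := by
  have hmv : ∀ (z : Fin m → ℤ) (i : Fin n), ((P * C * Q) *ᵥ z) i
      = if h : (i:ℕ) < m then GG (P * C * Q) i * z ⟨i, h⟩ else 0 := by
    intro z i
    have := D_mulVec (A := ℤ) (P * C * Q) hdiag z i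
    have e : (P * C * Q).map (Int.cast : ℤ → ℤ) = P * C * Q := by
      ext a b; simp only [Matrix.map_apply, Int.cast_id]
    rw [e] at this
    simpa using this
  constructor
  · rintro ⟨x, rfl⟩ i
    have : P *ᵥ (C.mulVecLin x) = (P * C * Q) *ᵥ (Q' *ᵥ x) := by
      rw [Matrix.mulVec_mulVec, Matrix.mul_assoc, hQ2, Matrix.mul_one, Matrix.mulVecLin_apply, Matrix.mulVec_mulVec]
    rw [this, hmv]
    split_ifs <;> simp
  · intro h
    choose q hq using h
    refine ⟨Q *ᵥ (fun j => if hj : (j : ℕ) < n then q ⟨j, hj⟩ else 0), ?_⟩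
    have e : (P * C * Q) *ᵥ (fun j : Fin m => if hj : (j : ℕ) < n then q ⟨j, hj⟩ else 0) = P *ᵥ w := by
      ext i
      rw [hmv, hq]
      split_ifs with h1 h2
      · rfl
      · exact absurd i.2 h2
      · have : GG (P * C * Q) i = 0 := by
          by_contra h0; exact h1 (GG_lt _ _ h0).2
        rw [this]; simp
    have e2 := congrArg (fun z => P' *ᵥ z) e
    simp only [Matrix.mulVec_mulVec] at e2
    rw [hP, Matrix.one_mulVec, ← Matrix.mul_assoc, ← Matrix.mul_assoc, hP, Matrix.one_mul] at e2
    rw [Matrix.mulVecLin_apply, Matrix.mulVec_mulVec, e2]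

theorem card_AbC {n m : ℕ} (C : Matrix (Fin n) (Fin m) ℤ)
    (P P' : Matrix (Fin n) (Fin n) ℤ) (Q Q' : Matrix (Fin m) (Fin m) ℤ)
    (hP : P' * P = 1) (hP2 : P * P' = 1) (hQ2 : Q * Q' = 1)
    (hdiag : ∀ (i : Fin n) (j : Fin m), ((i : ℕ) ≠ (j : ℕ)) → (P * C * Q) i j = 0) :
    Nat.card (AbC C) = ∏ i : {i : Fin n // GG (P * C * Q) i ≠ 0}, (GG (P * C * Q) i).natAbs := by
  have hmem := mem_range_iff C P P' Q Q' hP hQ2 hdiag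
  set g : ℕ → ℤ := GG (P * C * Q) with hg
  let ext : ({i : Fin n // g i ≠ 0} → ℤ) →ₗ[ℤ] (Fin n → ℤ) :=
    { toFun := fun y i => if h : g i ≠ 0 then y ⟨i, h⟩ else 0
      map_add' := by
        intro x y; ext i; simp only [Pi.add_apply]; split_ifs <;> simp
      map_smul' := by
        intro c y; ext i; simp }
  have hext : ∀ y i, ext y i = if h : g i ≠ 0 then y ⟨i, h⟩ else 0 := fun y i => rfl
  let ψ : ({i : Fin n // g i ≠ 0} → ℤ) →ₗ[ℤ] ((Fin n → ℤ) ⧸ LinearMap.range C.mulVecLin) :=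
    (Submodule.mkQ _).comp (P'.mulVecLin.comp ext)
  have hψ0 : ∀ y, ψ y = 0 ↔ ∀ i, g i.1 ∣ y i := by
    intro y
    have : ψ y = Submodule.Quotient.mk (P' *ᵥ ext y) := rfl
    rw [this, Submodule.Quotient.mk_eq_zero, hmem, Matrix.mulVec_mulVec, hP2, Matrix.one_mulVec]
    constructor
    · rintro h ⟨i, hi⟩
      have := h i
      rw [hext, dif_pos hi] at this
      exact this
    · intro h i
      rw [hext]
      split_ifs with hi
      · exact h ⟨i, hi⟩
      · simp
  let θ : ({i : Fin n // g i ≠ 0} → ℤ) →ₗ[ℤ] (∀ i : {i : Fin n // g i ≠ 0}, ZMod (g i).natAbs) :=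
    LinearMap.pi (fun i => (Int.castAddHom (ZMod (g i).natAbs)).toIntLinearMap.comp (LinearMap.proj i))
  have hθ : ∀ y i, θ y i = ((y i : ℤ) : ZMod (g i).natAbs) := fun y i => rfl
  have hker : LinearMap.ker ψ = LinearMap.ker θ := by
    ext y
    rw [LinearMap.mem_ker, LinearMap.mem_ker, hψ0, funext_iff]
    apply forall_congr'
    intro i
    rw [hθ, Pi.zero_apply, ZMod.intCast_zmod_eq_zero_iff_dvd, Int.natAbs_dvd]
  have hsurj : Function.Surjective θ := by
    intro z
    choose y hy using fun i => ZMod.intCast_surjective (z i)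
    exact ⟨y, funext hy⟩
  have hrange : LinearMap.range ψ = Submodule.torsion ℤ ((Fin n → ℤ) ⧸ LinearMap.range C.mulVecLin) := by
    apply le_antisymm
    · rintro _ ⟨y, rfl⟩
      rw [Submodule.mem_torsion_iff]
      have hne : ∏ i : {i : Fin n // g i ≠ 0}, g i ≠ 0 := Finset.prod_ne_zero_iff.2 (fun i _ => i.2)
      refine ⟨⟨∏ i : {i : Fin n // g i ≠ 0}, g i, mem_nonZeroDivisors_of_ne_zero hne⟩, ?_⟩
      rw [Submonoid.mk_smul, ← map_smul, hψ0]
      intro i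
      rw [Pi.smul_apply, smul_eq_mul]
      exact Dvd.dvd.mul_right (Finset.dvd_prod_of_mem (fun i : {i : Fin n // g i ≠ 0} => g i) (Finset.mem_univ i)) _
    · intro z hz
      rw [Submodule.mem_torsion_iff] at hz
      obtain ⟨⟨c, hc⟩, h⟩ := hz
      obtain ⟨w, rfl⟩ := Submodule.Quotient.mk_surjective _ z
      rw [Submonoid.mk_smul, ← Submodule.Quotient.mk_smul, Submodule.Quotient.mk_eq_zero, hmem] at h
      have hc0 := nonZeroDivisors.ne_zero hc
      refine ⟨fun i => (P *ᵥ w) i, ?_⟩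
      have e : ext (fun i => (P *ᵥ w) i) = P *ᵥ w := by
        ext i
        rw [hext]
        split_ifs with hi
        · rfl
        · have := h i
          push Not at hi
          rw [hi, zero_dvd_iff, Matrix.mulVec_smul, Pi.smul_apply, smul_eq_mul] at this
          exact ((mul_eq_zero.1 this).resolve_left hc0).symm
      have : ψ (fun i => (P *ᵥ w) i) = Submodule.Quotient.mk (P' *ᵥ ext (fun i => (P *ᵥ w) i)) := rfl
      rw [this, e, Matrix.mulVec_mulVec, hP, Matrix.one_mulVec]
  have h1 : Nat.card (AbC C) = Nat.card (LinearMap.range ψ) := by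
    rw [hrange]; rfl
  rw [h1, ← Nat.card_congr ψ.quotKerEquivRange.toEquiv, hker,
    Nat.card_congr (θ.quotKerEquivOfSurjective hsurj).toEquiv, Nat.card_pi]
  simp

theorem val_AbC (p : ℕ) [Fact p.Prime] {n m : ℕ} (D : Matrix (Fin n) (Fin m) ℤ) :
    padicValNat p (∏ i : {i : Fin n // GG D i ≠ 0}, (GG D i).natAbs) = ∑ k ∈ RR D, padicValInt p (GG D k) := by
  have h : ∀ s : Finset {i : Fin n // GG D i ≠ 0}, padicValNat p (∏ i ∈ s, (GG D i).natAbs)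
     = ∑ i ∈ s, padicValInt p (GG D i) := by
    intro s
    induction s using Finset.induction_on with
    | empty => simp
    | insert a s ha ih =>
      rw [Finset.prod_insert ha, Finset.sum_insert ha, padicValNat.mul, ih]
      · rfl
      · simpa using a.2
      · exact Finset.prod_ne_zero_iff.2 (fun i _ => by simpa using i.2)
  rw [h, RR, Finset.sum_filter, Finset.sum_range, ← Finset.sum_filter]
  exact (Finset.sum_subtype _ (by simp) (fun i : Fin n => padicValInt p (GG D i))).symm

theorem stmt1 (p n m : ℕ) [Fact p.Prime] (C : Matrix (Fin n) (Fin m) ℤ)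
    (P : Matrix (Fin n) (Fin n) ℤ) (Q : Matrix (Fin m) (Fin m) ℤ)
    (hP : IsUnit P.det) (hQ : IsUnit Q.det)
    (hdiag : ∀ (i : Fin n) (j : Fin m), ((i : ℕ) ≠ (j : ℕ)) → (P * C * Q) i j = 0)
    (d : ℕ) (hd : d = padicValNat p (Nat.card (AbC C)))
    (J : ℕ) (t : Fin J → ℕ) (s : Fin (J + 1) → ℕ)
    (ht0 : ∀ i, 0 < t i) (htmono : StrictMono t) (hsanti : StrictAnti s)
    (hslast : s (Fin.last J)
      = Module.finrank (ZMod p)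
          (redBar p m ((LinearMap.ker (C.map (Int.cast : ℤ → ℤ_[p])).mulVecLin : Set (Fin m → ℤ_[p])))))
    (hdims : ∀ i : Fin J,
      s i.castSucc ≤ Module.finrank (ZMod p) (redBar p m (Mset p n m C (t i))))
    (hsum : d = ∑ i : Fin J, (s i.castSucc - s i.succ) * t i) :
    elemDivCount p (P * C * Q) 0 = m - s 0
    ∧ (∀ i : Fin J, elemDivCount p (P * C * Q) (t i) = s i.castSucc - s i.succ)
    ∧ ∀ a : ℕ, a ≠ 0 → (∀ i : Fin J, a ≠ t i) → elemDivCount p (P * C * Q) a = 0 := by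
  have hP1 := Matrix.nonsing_inv_mul P hP
  have hP2 := Matrix.mul_nonsing_inv P hP
  have hQ1 := Matrix.nonsing_inv_mul Q hQ
  have hQ2 := Matrix.mul_nonsing_inv Q hQ
  rw [card_AbC C P P⁻¹ Q Q⁻¹ hP1 hP2 hQ2 hdiag, val_AbC] at hd
  have hfr := finrank_dvd p n m C P P⁻¹ Q Q⁻¹ hP1 hQ1 hQ2 hdiag
  simp only [elem_eq]
  set D := P * C * Q with hD
  -- rank of the kernel
  have hpp : Prime (p : ℤ_[p]) := PadicInt.prime_p
  have hk : s (Fin.last J) = ((Finset.range m).filter (fun k => GG D k = 0)).card := by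
    rw [hslast, ← fin_card, ← hfr 0 ?_ _ ?_]
    · have e : (LinearMap.ker (C.map (Int.cast : ℤ → ℤ_[p])).mulVecLin : Set (Fin m → ℤ_[p]))
          = {x | ∀ i, (0 : ℤ_[p]) ∣ ((C.map (Int.cast : ℤ → ℤ_[p])) *ᵥ x) i} := by
        ext x
        simp [funext_iff]
      rw [e]
    · intro a y ha hay
      rw [zero_dvd_iff] at ha hay
      rw [(mul_eq_zero.1 hay).resolve_left ha]; simp
    · intro k; simp
  have hRm : ((Finset.range m).filter (fun k => GG D k = 0)).card + (RR D).card = m := by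
    rw [RR_eq]
    simpa using Finset.card_filter_add_card_filter_not (s := Finset.range m) (fun k => GG D k = 0)
  have hM : ∀ i : Fin J, s i.castSucc ≤ s (Fin.last J)
      + ((RR D).filter (fun k => t i ≤ padicValInt p (GG D k))).card := by
    intro i
    refine (hdims i).trans (le_of_eq ?_)
    rw [Mset, hfr ((p : ℤ_[p]) ^ t i) ?_ (Finset.univ.filter
      (fun k : Fin m => GG D k = 0 ∨ t i ≤ padicValInt p (GG D k))) ?_]
    · rw [fin_card m (fun k => GG D k = 0 ∨ t i ≤ padicValInt p (GG D k)), hk, RR_eq, Finset.filter_filter,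
        ← Finset.card_union_of_disjoint]
      · congr 1
        ext k
        simp only [Finset.mem_filter, Finset.mem_union]
        tauto
      · rw [Finset.disjoint_left]
        intro k h1 h2
        simp only [Finset.mem_filter] at h1 h2
        exact h2.2.1 h1.2
    · intro a y ha hay
      by_contra hy
      exact ha (hpp.pow_dvd_of_dvd_mul_right _ hy hay)
    · intro k
      rw [PadicInt.pow_p_dvd_int_iff, padicValInt_dvd_iff]
      simp
  have hsum' : ∑ i : Fin J, ((s i.castSucc : ℤ) - s i.succ) * ((t i : ℤ) - (0 : ℕ))
      = ∑ k ∈ RR D, ((padicValInt p (GG D k) - 0 : ℕ) : ℤ) := by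
    rw [hd] at hsum
    have h := congrArg (Nat.cast : ℕ → ℤ) hsum
    simp only [Nat.sub_zero]
    rw [← Nat.cast_sum, h, Nat.cast_sum]
    apply Finset.sum_congr rfl
    intro i _
    have := (hsanti (Fin.castSucc_lt_succ (i := i))).le
    push_cast [Nat.cast_sub this]
    ring
  obtain ⟨A1, A2, A3⟩ := (comb (RR D) (fun k => padicValInt p (GG D k)) J t s 0 ht0 htmono hM).2 hsum'
  refine ⟨?_, ?_, ?_⟩
  · have := Finset.card_filter_add_card_filter_not (s := RR D) (fun k => padicValInt p (GG D k) = 0)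
    have e : (RR D).filter (fun k => ¬ padicValInt p (GG D k) = 0)
       = (RR D).filter (fun k => 0 < padicValInt p (GG D k)) :=
      Finset.filter_congr (fun k _ => by omega)
    rw [e] at this
    omega
  · intro i
    obtain ⟨B1, B2⟩ := A2 i
    have e : (RR D).filter (fun k => t i ≤ padicValInt p (GG D k))
       = (RR D).filter (fun k => padicValInt p (GG D k) = t i)
        ∪ (RR D).filter (fun k => t i < padicValInt p (GG D k)) := by
      rw [← Finset.filter_or]
      exact Finset.filter_congr (fun k _ => by omega)
    have hdj : Disjoint ((RR D).filter (fun k => padicValInt p (GG D k) = t i))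
        ((RR D).filter (fun k => t i < padicValInt p (GG D k))) := by
      rw [Finset.disjoint_left]
      intro k h1 h2
      simp only [Finset.mem_filter] at h1 h2
      omega
    have e2 := congrArg Finset.card e
    rw [Finset.card_union_of_disjoint hdj] at e2
    omega
  · intro a ha hat
    rw [Finset.card_eq_zero, Finset.filter_eq_empty_iff]
    intro k hk' hka
    rcases A3 k hk' with h | ⟨i, h⟩
    · omega
    · exact hat i (by omega)
end

section
/- Let Γ be a connected strongly regular graph with Laplacian L = kI − A, nonzero Laplacian eigenvalues t = k − r (multiplicity f) and u = k − s (multiplicity g), and μ > 0. Let ℓ be a prime with ℓ ∣ t, ℓ ∤ u, set a = v_ℓ(μ), and assume v_ℓ(t) = a + c and v_ℓ(v) = c, where v is the number of vertices. If a = 0 and c > 0, then the ℓ-elementary divisors of the critical group K are: ℓ^0 with multiplicity g + 1 and ℓ^c with multiplicity f − 1, and no others. -/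
open Matrix Polynomial

noncomputable def elemDivCountSq {V : Type*} (p : ℕ) (D : Matrix V V ℤ) (a : ℕ) : ℕ :=
  Nat.card {i : V // D i i ≠ 0 ∧ (p : ℤ) ^ a ∣ D i i ∧ ¬ (p : ℤ) ^ (a + 1) ∣ D i i}

lemma symm_nilp {V : Type*} [Fintype V] [DecidableEq V] (N : Matrix V V ℤ) (hN : Nᵀ = N) (n : ℕ)
    (h : N ^ (2 ^ n) = 0) : N = 0 := by
  induction n with
  | zero => simpa using h
  | succ n ih =>
    apply ih
    have h2 : (N ^ (2 ^ n))ᵀ * (N ^ (2 ^ n)) = 0 := by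
      rw [transpose_pow, hN, ← pow_add, ← two_mul, ← pow_succ']; exact h
    ext i j
    have h3 := congrFun (congrFun h2 j) j
    simp only [mul_apply, transpose_apply, Matrix.zero_apply] at h3
    rw [Finset.sum_eq_zero_iff_of_nonneg (fun i _ => mul_self_nonneg _)] at h3
    simpa using h3 i (Finset.mem_univ _)

lemma mat_min_zero {V : Type*} [Fintype V] [DecidableEq V] (A : Matrix V V ℤ) (hA : Aᵀ = A)
    (k r s : ℤ) (f g : ℕ) (hchar : A.charpoly = (X - C k) * (X - C r) ^ f * (X - C s) ^ g) :
    (k • (1 : Matrix V V ℤ) - A) * ((A - r • 1) * (A - s • 1)) = 0 := by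
  set p : ℤ[X] := (X - C k) * ((X - C r) * (X - C s)) with hp
  have hpA : aeval A p = (A - k • 1) * ((A - r • 1) * (A - s • 1)) := by
    simp [hp]
  have hsym : (aeval A p)ᵀ = aeval A p := by
    rw [hpA]
    simp only [transpose_mul, transpose_sub, transpose_smul, transpose_one, hA]
    simp only [sub_mul, mul_sub, smul_mul_assoc, mul_smul_comm, one_mul, mul_one, mul_assoc,
      smul_sub, smul_smul]
    module
  have hdvd : A.charpoly ∣ p ^ (2 ^ (f + g + 1)) := by
    have h1 : A.charpoly ∣ p ^ (f + g + 1) := by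
      rw [hchar, hp, mul_pow, mul_pow, mul_assoc]
      refine mul_dvd_mul (dvd_pow_self _ (by omega)) (mul_dvd_mul ?_ ?_)
      · exact pow_dvd_pow _ (by omega)
      · exact pow_dvd_pow _ (by omega)
    exact h1.trans (pow_dvd_pow _ Nat.lt_two_pow_self.le)
  have hz : aeval A p ^ (2 ^ (f + g + 1)) = 0 := by
    obtain ⟨q, hq⟩ := hdvd
    rw [← map_pow, hq, map_mul, aeval_self_charpoly, zero_mul]
  have := symm_nilp _ hsym _ hz
  rw [hpA] at this
  rw [← neg_sub A, neg_mul, this, neg_zero]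

lemma ker_const {V : Type*} [Fintype V] [DecidableEq V] (G : SimpleGraph V) [DecidableRel G.Adj]
    (k : ℕ) (hreg : G.IsRegularOfDegree k) (hconn : G.Connected) (x : V → ℤ)
    (hx : ((k : ℤ) • (1 : Matrix V V ℤ) - G.adjMatrix ℤ) *ᵥ x = 0) (i j : V) : x i = x j := by
  have h := (G.lapMatrix_mulVec_eq_zero_iff_forall_reachable (x := fun i => (x i : ℝ))).1 ?_ i j
    (hconn.preconnected i j)
  · exact_mod_cast h
  ext y
  rw [SimpleGraph.lapMatrix_mulVec_apply]
  have := congrFun hx y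
  simp [sub_mulVec, SimpleGraph.adjMatrix_mulVec_apply] at this
  rw [hreg y]
  simp only [Pi.zero_apply]
  exact_mod_cast this

lemma upper {V : Type*} [Fintype V] [DecidableEq V] (L M P Q' : Matrix V V ℤ) (d : V → ℤ)
    (t u m : ℤ) (ℓ c : ℕ) (hℓ : ℓ.Prime)
    (hPL : P * L = diagonal d * Q')
    (hLM : ∀ x y, (L * M) x y = m - (t * u) * (1 : Matrix V V ℤ) x y)
    (hu : ¬ (ℓ : ℤ) ∣ u) (ht : ¬ (ℓ : ℤ) ^ (c + 1) ∣ t) (htc : (ℓ : ℤ) ^ c ∣ t)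
    (i : V) (hi : (ℓ : ℤ) ^ (c + 1) ∣ d i) (x y : V) : (ℓ : ℤ) ∣ P i x - P i y := by
  have hp : Prime (ℓ : ℤ) := Nat.prime_iff_prime_int.1 hℓ
  have key : ∀ x, m * ∑ z, P i z - t * u * P i x = d i * (Q' * M) i x := by
    intro x
    have h1 : (P * (L * M)) i x = d i * (Q' * M) i x := by
      rw [← mul_assoc, hPL, mul_assoc, diagonal_mul]
    rw [← h1, mul_apply]
    simp only [hLM, mul_sub, Finset.sum_sub_distrib, one_apply]
    simp [Finset.mul_sum, mul_comm]
  have h2 : (ℓ : ℤ) ^ (c + 1) ∣ t * u * (P i x - P i y) := by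
    have : t * u * (P i x - P i y) = d i * ((Q' * M) i y - (Q' * M) i x) := by
      linear_combination key y - key x
    rw [this]; exact hi.mul_right _
  obtain ⟨t', rfl⟩ := htc
  rw [pow_succ, mul_assoc, mul_assoc] at h2
  have hne : (ℓ : ℤ) ^ c ≠ 0 := pow_ne_zero _ hp.ne_zero
  have h3 := (mul_dvd_mul_iff_left hne).1 h2
  rw [pow_succ, mul_dvd_mul_iff_left hne] at ht
  rcases hp.dvd_or_dvd h3 with h | h
  · exact absurd h ht
  · exact (hp.dvd_or_dvd h).resolve_left hu

lemma upper_unique {V : Type*} [Fintype V] [DecidableEq V] (P P' : Matrix V V ℤ) (hPP : P * P' = 1)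
    (ℓ : ℕ) (hℓ : ℓ.Prime) (i j : V) (hi : ∀ x y, (ℓ : ℤ) ∣ P i x - P i y)
    (hj : ∀ x y, (ℓ : ℤ) ∣ P j x - P j y) : i = j := by
  by_contra hij
  have hp : Prime (ℓ : ℤ) := Nat.prime_iff_prime_int.1 hℓ
  have key : ∀ a b, (∀ x y, (ℓ : ℤ) ∣ P a x - P a y) →
      (ℓ : ℤ) ∣ (1 : Matrix V V ℤ) a b - P a a * ∑ x, P' x b := by
    intro a b h
    rw [← hPP, mul_apply, Finset.mul_sum, ← Finset.sum_sub_distrib]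
    refine Finset.dvd_sum fun x _ => ?_
    rw [← sub_mul]; exact (h x a).mul_right _
  have h1 := key i i hi
  have h2 := key i j hi
  have h3 := key j j hj
  rw [one_apply_eq] at h1 h3
  rw [one_apply_ne hij] at h2
  rw [zero_sub, dvd_neg] at h2
  apply hp.not_dvd_one
  rcases hp.dvd_or_dvd h2 with h | h
  · exact (dvd_sub_left (h.mul_right _)).1 h1
  · exact (dvd_sub_left (h.mul_left _)).1 h3

lemma lower {V : Type*} [Fintype V] [DecidableEq V] (L M P Q P' Q' : Matrix V V ℤ) (d : V → ℤ)
    (t u m : ℤ) (ℓ c : ℕ) (hℓ : ℓ.Prime)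
    (hPL : P * L = diagonal d * Q') (hLQ : L * Q = P' * diagonal d) (hPP : P * P' = 1)
    (hM : M = L - (t + u) • 1)
    (hLM : ∀ x y, (L * M) x y = m - (t * u) * (1 : Matrix V V ℤ) x y)
    (hu : ¬ (ℓ : ℤ) ∣ u) (hm : ¬ (ℓ : ℤ) ∣ m) (htc : (ℓ : ℤ) ^ c ∣ t)
    (i : V) (hi : (ℓ : ℤ) ∣ d i) : (ℓ : ℤ) ^ c ∣ d i := by
  have hp : Prime (ℓ : ℤ) := Nat.prime_iff_prime_int.1 hℓ
  by_contra hnd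
  have hd0 : d i ≠ 0 := by rintro h; rw [h] at hnd; simp at hnd
  obtain ⟨b, d', hd', hb⟩ : ∃ (b : ℕ) (d' : ℤ), ¬ (ℓ : ℤ) ∣ d' ∧ d i = (ℓ : ℤ) ^ b * d' := by
    have hf : FiniteMultiplicity (ℓ : ℤ) (d i) := FiniteMultiplicity.of_prime_left hp hd0
    obtain ⟨d', h1, h2⟩ := hf.exists_eq_pow_mul_and_not_dvd
    exact ⟨_, d', h2, h1⟩
  have hbc : b < c := by
    by_contra hcb
    exact hnd (hb ▸ (pow_dvd_pow _ (not_lt.1 hcb)).mul_right _)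
  obtain ⟨t', ht'⟩ := htc
  obtain ⟨n, hn⟩ : ∃ n, c = b + (n + 1) := ⟨c - b - 1, by omega⟩
  have hcomm : L * M = M * L := by
    rw [hM, mul_sub, sub_mul, mul_smul_comm, smul_mul_assoc, mul_one, one_mul]
  have hlt : (ℓ : ℤ) ∣ t := by rw [ht']; exact (dvd_pow_self _ (by omega)).mul_right _
  -- row sums
  have hrow : (ℓ : ℤ) ∣ ∑ z, P i z := by
    have h1 : (P * (L * M)) i i = d i * (Q' * M) i i := by
      rw [← mul_assoc, hPL, mul_assoc, diagonal_mul]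
    rw [mul_apply] at h1
    simp only [hLM, mul_sub, Finset.sum_sub_distrib, one_apply] at h1
    simp only [mul_ite, mul_one, mul_zero, Finset.sum_ite_eq', Finset.mem_univ, if_true,
      ← Finset.sum_mul] at h1
    have h2 : (ℓ : ℤ) ∣ (∑ z, P i z) * m := by
      rw [sub_eq_iff_eq_add.1 h1]
      exact dvd_add (hi.mul_right _) ((hlt.mul_right _).mul_left _)
    exact (hp.dvd_or_dvd h2).resolve_right hm
  have hcol : ∀ x, m * ∑ z, Q z i - t * u * Q x i
      = ((L * P') x i - (t + u) * P' x i) * d i := by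
    intro x
    have h1 : ((L * M) * Q) x i = (M * P') x i * d i := by
      rw [hcomm, mul_assoc, hLQ, ← mul_assoc, mul_diagonal]
    have h2 : (M * P') x i = (L * P') x i - (t + u) * P' x i := by
      rw [hM, sub_mul, smul_mul_assoc, one_mul, Matrix.sub_apply, Matrix.smul_apply, smul_eq_mul]
    rw [← h2, ← h1, mul_apply]
    simp only [hLM, sub_mul, Finset.sum_sub_distrib, one_apply]
    simp [Finset.mul_sum]
  obtain ⟨z, hz⟩ : (ℓ : ℤ) ^ b ∣ m * ∑ z, Q z i := by
    rw [sub_eq_iff_eq_add.1 (hcol i), hb, ht', hn, pow_add]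
    refine dvd_add ⟨((L * P') i i - ((ℓ : ℤ) ^ b * (ℓ : ℤ) ^ (n + 1) * t' + u) * P' i i) * d', by ring⟩
      ⟨(ℓ : ℤ) ^ (n + 1) * t' * u * Q i i, by ring⟩
  have hne : (ℓ : ℤ) ^ b ≠ 0 := pow_ne_zero _ hp.ne_zero
  have hcol2 : ∀ x, z - (ℓ : ℤ) ^ (n + 1) * t' * u * Q x i
      = ((L * P') x i - (t + u) * P' x i) * d' := by
    intro x
    apply mul_left_cancel₀ hne
    have := hcol x
    rw [hz, hb] at this
    have ht2 : t = (ℓ : ℤ) ^ b * (ℓ : ℤ) ^ (n + 1) * t' := by rw [ht', hn, pow_add]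
    have h3 : t * u * Q x i = (ℓ : ℤ) ^ b * ((ℓ : ℤ) ^ (n + 1) * t' * u * Q x i) := by
      rw [ht2]; ring
    linear_combination this + h3
  have hsum : ∑ x, P i x * (z - (ℓ : ℤ) ^ (n + 1) * t' * u * Q x i)
      = ∑ x, P i x * (((L * P') x i - (t + u) * P' x i) * d') :=
    Finset.sum_congr rfl fun x _ => by rw [hcol2]
  have hl : ∑ x, P i x * (z - (ℓ : ℤ) ^ (n + 1) * t' * u * Q x i)
      = (∑ x, P i x) * z - (ℓ : ℤ) ^ (n + 1) * t' * u * (P * Q) i i := by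
    rw [mul_apply, Finset.sum_mul, Finset.mul_sum, ← Finset.sum_sub_distrib]
    exact Finset.sum_congr rfl fun x _ => by ring
  have hr : ∑ x, P i x * (((L * P') x i - (t + u) * P' x i) * d')
      = ((P * (L * P')) i i - (t + u) * (P * P') i i) * d' := by
    rw [mul_apply, mul_apply, Finset.mul_sum, ← Finset.sum_sub_distrib, Finset.sum_mul]
    exact Finset.sum_congr rfl fun x _ => by ring
  rw [hl, hr, hPP, one_apply_eq, ← mul_assoc P, hPL, mul_assoc (diagonal d), diagonal_mul] at hsum
  have : u * d' = d i * (Q' * P') i i * d' - t * d' - (∑ x, P i x) * z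
      + (ℓ : ℤ) ^ (n + 1) * t' * u * (P * Q) i i := by linear_combination hsum
  have hfin : (ℓ : ℤ) ∣ u * d' := by
    rw [this]
    refine dvd_add (dvd_sub (dvd_sub ((hi.mul_right _).mul_right _) (hlt.mul_right _))
      (hrow.mul_right _)) ?_
    rw [mul_assoc, mul_assoc]
    exact (dvd_pow_self _ (by omega)).mul_right _
  rcases hp.dvd_or_dvd hfin with h | h
  · exact hu h
  · exact hd' h

lemma det_lemma {V : Type*} [Fintype V] [DecidableEq V] (A P Q : Matrix V V ℤ) (d : V → ℤ)
    (k r s : ℤ) (f g : ℕ) (hchar : A.charpoly = (X - C k) * (X - C r) ^ f * (X - C s) ^ g)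
    (hD : P * (k • (1 : Matrix V V ℤ) - A) * Q = diagonal d) (j : V) (hj : d j = 0) :
    P.det * ((k - r) ^ f * (k - s) ^ g) * Q.det = (∏ i ∈ Finset.univ.erase j, d i) * (P * Q) j j := by
  have h1 : (A - scalar V k).charpoly
      = X * ((X + C (k - r)) ^ f * (X + C (k - s)) ^ g) := by
    rw [charpoly_sub_scalar, hchar]
    simp only [mul_comp, pow_comp, sub_comp, X_comp, C_comp, map_sub]
    ring
  set W : Matrix V V ℤ[X] := (diagonal d).map C + (X : ℤ[X]) • (P * Q).map C with hW
  have h2 : (P.map C) * charmatrix (A - scalar V k) * (Q.map C) = W := by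
    have : charmatrix (A - scalar V k) = (X : ℤ[X]) • 1 + (k • (1 : Matrix V V ℤ) - A).map C := by
      ext a b
      by_cases hab : a = b
      · subst hab; simp [charmatrix_apply]; ring
      · simp [charmatrix_apply, hab]
    rw [this, hW, ← hD, Matrix.map_mul, Matrix.map_mul, Matrix.map_mul, mul_add, add_mul, add_comm]
    simp
  have h3 : W.det = X * (W.updateRow j ((P * Q).map C j)).det := by
    rw [← det_updateRow_smul]
    congr 1
    ext a b
    by_cases ha : a = j
    · subst ha
      rw [updateRow_self, hW]
      by_cases hab : a = b
      · subst hab; simp [hj]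
      · simp [hab]
    · rw [updateRow_ne ha]
  have h4 : C P.det * ((X + C (k - r)) ^ f * (X + C (k - s)) ^ g) * C Q.det
      = (W.updateRow j ((P * Q).map C j)).det := by
    apply mul_left_cancel₀ (X_ne_zero : (X : ℤ[X]) ≠ 0)
    rw [← h3, ← h2, det_mul, det_mul, ← charpoly, h1]
    have e : ∀ N : Matrix V V ℤ, (N.map C).det = C N.det := fun N => (RingHom.map_det C N).symm
    rw [e, e]; ring
  have h5 := congrArg (evalRingHom (0 : ℤ)) h4
  rw [RingHom.map_det (evalRingHom 0) (W.updateRow j _)] at h5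
  have h6 : (evalRingHom (0 : ℤ)).mapMatrix (W.updateRow j ((P * Q).map C j))
      = (diagonal d).updateRow j ((P * Q) j) := by
    ext a b
    by_cases ha : a = j
    · subst ha; simp [-Matrix.map_mul]
    · by_cases hab : a = b
      · subst hab; simp [ha, hW]
      · simp [ha, hW, hab]
  rw [h6, ← cramer_transpose_apply, diagonal_transpose, cramer_eq_adjugate_mulVec,
    adjugate_diagonal, mulVec_diagonal] at h5
  simpa using h5

lemma val_prod {V : Type*} (S : Finset V) (d : V → ℤ) (ℓ : ℕ) [Fact ℓ.Prime]
    (h : ∀ i ∈ S, d i ≠ 0) : padicValInt ℓ (∏ i ∈ S, d i) = ∑ i ∈ S, padicValInt ℓ (d i) := by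
  classical
  induction S using Finset.induction_on with
  | empty => simp
  | insert a S ha ih =>
    rw [Finset.prod_insert ha, Finset.sum_insert ha, padicValInt.mul (h a (by simp))
      (Finset.prod_ne_zero_iff.2 fun i hi => h i (by simp [hi])), ih fun i hi => h i (by simp [hi])]

lemma val_pow (x : ℤ) (n : ℕ) (ℓ : ℕ) [Fact ℓ.Prime] (h : x ≠ 0) :
    padicValInt ℓ (x ^ n) = n * padicValInt ℓ x := by
  have := val_prod (Finset.range n) (fun _ => x) ℓ (fun _ _ => h)
  simpa using this

lemma val_unit (x : ℤ) (ℓ : ℕ) (h : IsUnit x) : padicValInt ℓ x = 0 := by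
  rcases Int.isUnit_iff.1 h with rfl | rfl <;> simp [padicValInt]

theorem stmt18 {V : Type*} [Fintype V] [DecidableEq V] (G : SimpleGraph V) [DecidableRel G.Adj]
    (v k lam mu : ℕ) (h : G.IsSRGWith v k lam mu) (hconn : G.Connected) (hmu : 0 < mu)
    (r s : ℤ) (f g : ℕ)
    (hchar : (G.adjMatrix ℤ).charpoly
      = (X - C (k : ℤ)) * (X - C r) ^ f * (X - C s) ^ g)
    (ℓ a c : ℕ) (hℓ : ℓ.Prime)
    (hlt : (ℓ : ℤ) ∣ ((k : ℤ) - r)) (hlu : ¬ (ℓ : ℤ) ∣ ((k : ℤ) - s))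
    (ha : a = padicValInt ℓ (mu : ℤ)) (ha0 : a = 0)
    (hvt : padicValInt ℓ ((k : ℤ) - r) = a + c)
    (hvv : padicValNat ℓ v = c) (hc : 0 < c)
    (P Q : Matrix V V ℤ) (hP : IsUnit P.det) (hQ : IsUnit Q.det)
    (hdiag : ∀ i j, i ≠ j → (P * ((k : ℤ) • (1 : Matrix V V ℤ) - G.adjMatrix ℤ) * Q) i j = 0) :
    elemDivCountSq ℓ (P * ((k : ℤ) • (1 : Matrix V V ℤ) - G.adjMatrix ℤ) * Q) 0 = g + 1
    ∧ elemDivCountSq ℓ (P * ((k : ℤ) • (1 : Matrix V V ℤ) - G.adjMatrix ℤ) * Q) c = f - 1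
    ∧ ∀ j : ℕ, j ≠ 0 → j ≠ c →
        elemDivCountSq ℓ (P * ((k : ℤ) • (1 : Matrix V V ℤ) - G.adjMatrix ℤ) * Q) j = 0 := by
  have : Fact ℓ.Prime := ⟨hℓ⟩
  have hp : Prime (ℓ : ℤ) := Nat.prime_iff_prime_int.1 hℓ
  rw [ha0, zero_add] at hvt
  have hker := ker_const G k h.regular hconn
  have hmz := mat_min_zero (G.adjMatrix ℤ) G.transpose_adjMatrix k r s f g hchar
  have hdet := fun d => det_lemma (G.adjMatrix ℤ) P Q d k r s f g hchar
  have hdeg : Fintype.card V = 1 + f + g := by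
    have := congrArg natDegree hchar
    rw [charpoly_natDegree_eq_dim, ((((monic_X_sub_C (k : ℤ)).mul ((monic_X_sub_C r).pow f)))).natDegree_mul
      ((monic_X_sub_C s).pow g), (monic_X_sub_C (k : ℤ)).natDegree_mul ((monic_X_sub_C r).pow f)] at this
    rw [(monic_X_sub_C r).natDegree_pow, (monic_X_sub_C s).natDegree_pow] at this
    simp only [natDegree_X_sub_C, mul_one] at this
    exact this
  have hL1 : ((k : ℤ) • (1 : Matrix V V ℤ) - G.adjMatrix ℤ) *ᵥ (fun _ => 1) = 0 := by
    ext x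
    have := h.regular x
    simp [sub_mulVec, SimpleGraph.adjMatrix_mulVec_apply, this]
  have hBM : ((G.adjMatrix ℤ - r • 1) * (G.adjMatrix ℤ - s • 1))
      = ((k : ℤ) • (1 : Matrix V V ℤ) - G.adjMatrix ℤ) *
        (((k : ℤ) • (1 : Matrix V V ℤ) - G.adjMatrix ℤ) - (((k : ℤ) - r) + (k - s)) • 1)
        + (((k : ℤ) - r) * (k - s)) • 1 := by
    simp only [sub_mul, mul_sub, smul_mul_assoc, mul_smul_comm, one_mul, mul_one,
      smul_sub, smul_smul]
    module
  have hBs : ((G.adjMatrix ℤ - r • 1) * (G.adjMatrix ℤ - s • 1))ᵀ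
      = ((G.adjMatrix ℤ - r • 1) * (G.adjMatrix ℤ - s • 1)) := by
    simp only [transpose_mul, transpose_sub, transpose_smul, transpose_one,
      SimpleGraph.transpose_adjMatrix]
    simp only [sub_mul, mul_sub, smul_mul_assoc, mul_smul_comm, one_mul, mul_one,
      smul_sub, smul_smul, mul_comm r s]
    module
  have hLs : ((k : ℤ) • (1 : Matrix V V ℤ) - G.adjMatrix ℤ)ᵀ
      = ((k : ℤ) • (1 : Matrix V V ℤ) - G.adjMatrix ℤ) := by
    simp [-zsmul_eq_mul]
  have hdet0 : ((k : ℤ) • (1 : Matrix V V ℤ) - G.adjMatrix ℤ).det = 0 := by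
    obtain ⟨x⟩ := hconn.nonempty
    refine exists_mulVec_eq_zero_iff.1 ⟨fun _ => 1, ?_, hL1⟩
    intro h0
    simpa using congrFun h0 x
  generalize (G.adjMatrix ℤ - r • 1) * (G.adjMatrix ℤ - s • 1) = B at hmz hBM hBs
  generalize ((k : ℤ) • (1 : Matrix V V ℤ) - G.adjMatrix ℤ) = L at *
  generalize ((k : ℤ) - r) = t at *
  generalize ((k : ℤ) - s) = u at *
  obtain ⟨x₀⟩ := hconn.nonempty
  -- the matrix identity
  have hBconst : ∀ x y, B x y = B x₀ x₀ := by
    have h1 : ∀ x x' y, B x y = B x' y := fun x x' y =>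
      hker (fun z => B z y) (by ext z; exact congrFun (congrFun hmz z) y) x x'
    have h2 : ∀ x y, B x y = B y x := fun x y => congrFun (congrFun hBs y) x
    intro x y
    rw [h1 x x₀ y, h2, h1 y x₀]
  obtain ⟨M, hM⟩ : ∃ M, M = L - (t + u) • 1 := ⟨_, rfl⟩
  obtain ⟨m, hm⟩ : ∃ m, m = B x₀ x₀ := ⟨_, rfl⟩
  rw [← hM] at hBM
  have hLM : ∀ x y, (L * M) x y = m - (t * u) * (1 : Matrix V V ℤ) x y := by
    intro x y
    rw [hm, ← hBconst x y, hBM, Matrix.add_apply, Matrix.smul_apply, smul_eq_mul]; ring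
  have hcomm : L * M = M * L := by
    rw [hM, mul_sub, sub_mul, mul_smul_comm, smul_mul_assoc, mul_one, one_mul]
  have hcard : Fintype.card V = v := h.card
  have hv0 : v ≠ 0 := by rintro rfl; simp at hvv; omega
  have htu : t * u = v * m := by
    have h1 : ((L * M) *ᵥ fun _ => 1) x₀ = 0 := by
      rw [hcomm, ← mulVec_mulVec, hL1, mulVec_zero]; rfl
    simp only [mulVec, dotProduct, mul_one, hLM, Finset.sum_sub_distrib, ← Finset.mul_sum,
      one_apply] at h1
    simp [hcard] at h1
    linarith
  have ht0 : t ≠ 0 := by rintro rfl; simp at hvt; omega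
  have hu0 : u ≠ 0 := by rintro rfl; simp at hlu
  have hm0 : m ≠ 0 := by
    rintro rfl
    simp [ht0, hu0] at htu
  have hvu : padicValInt ℓ u = 0 := padicValInt.eq_zero_of_not_dvd hlu
  have hvv' : padicValInt ℓ (v : ℤ) = c := by simpa using hvv
  have hvm : padicValInt ℓ m = 0 := by
    have := congrArg (padicValInt ℓ) htu
    rw [padicValInt.mul ht0 hu0, padicValInt.mul (by exact_mod_cast hv0) hm0] at this
    omega
  have hdvd : ∀ (n : ℕ) (x : ℤ), x ≠ 0 → ((ℓ : ℤ) ^ n ∣ x ↔ n ≤ padicValInt ℓ x) := by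
    intro n x hx
    rw [padicValInt_dvd_iff]; simp [hx]
  have hlm : ¬ (ℓ : ℤ) ∣ m := by
    have := hdvd 1 m hm0
    rw [pow_one, hvm] at this
    rw [this]; omega
  have htc : (ℓ : ℤ) ^ c ∣ t := (hdvd _ _ ht0).2 hvt.ge
  have htc1 : ¬ (ℓ : ℤ) ^ (c + 1) ∣ t := by rw [hdvd _ _ ht0]; omega
  -- Smith form
  obtain ⟨d, hd⟩ : ∃ d : V → ℤ, d = fun i => (P * L * Q) i i := ⟨_, rfl⟩
  have hD : P * L * Q = diagonal d := by
    ext i j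
    by_cases hij : i = j
    · subst hij; simp [hd]
    · rw [hdiag i j hij, diagonal_apply_ne _ hij]
  have hPP := mul_nonsing_inv P hP
  have hPP2 := nonsing_inv_mul P hP
  have hQQ := mul_nonsing_inv Q hQ
  have hQQ2 := nonsing_inv_mul Q hQ
  generalize P⁻¹ = P' at *
  generalize Q⁻¹ = Q' at *
  have hPL : P * L = diagonal d * Q' := by rw [← hD, mul_assoc _ Q, hQQ, mul_one]
  have hLQ : L * Q = P' * diagonal d := by rw [← hD, mul_assoc P, ← mul_assoc P', hPP2, one_mul]
  have hlow := lower L M P Q P' Q' d t u m ℓ c hℓ hPL hLQ hPP hM hLM hlu hlm htc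
  have hup := upper L M P Q' d t u m ℓ c hℓ hPL hLM hlu htc1 htc
  obtain ⟨j, hj⟩ : ∃ j, d j = 0 := by
    have h1 : (P * L * Q).det = 0 := by rw [det_mul, det_mul, hdet0]; simp
    rw [hD, det_diagonal, Finset.prod_eq_zero_iff] at h1
    obtain ⟨j, -, hj⟩ := h1
    exact ⟨j, hj⟩
  have huniq : ∀ i, (ℓ : ℤ) ^ (c + 1) ∣ d i → i = j := fun i hi =>
    upper_unique P P' hPP ℓ hℓ i j (hup i hi) (hup j (by simp [hj]))
  have hd0 : ∀ i, i ≠ j → d i ≠ 0 := fun i hij h0 => hij (huniq i (by simp [h0]))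
  have hval : ∀ i, i ≠ j → padicValInt ℓ (d i) = 0 ∨ padicValInt ℓ (d i) = c := by
    intro i hij
    have h1 := fun n => hdvd n (d i) (hd0 i hij)
    have h2 := mt (huniq i) hij
    have h3 := hlow i
    rw [h1] at h2 h3
    have h4 := h1 1
    rw [pow_one] at h4
    rw [h4] at h3
    omega
  -- the product of the nonzero entries
  have hPQ : ∃ β γ : ℤ, IsUnit β ∧ IsUnit γ ∧ (P * Q) j j = β * γ * v := by
    have hPc : ∀ x, P j x = P j x₀ := by
      intro x
      refine hker (fun z => P j z) ?_ x x₀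
      ext z
      have h1 : (P * L) j z = 0 := by rw [hPL, diagonal_mul, hj, zero_mul]
      rw [← hLs, mulVec_transpose]
      exact h1
    have hQc : ∀ x, Q x j = Q x₀ j := by
      intro x
      refine hker (fun z => Q z j) ?_ x x₀
      ext z
      have h1 : (L * Q) z j = 0 := by rw [hLQ, mul_diagonal, hj, mul_zero]
      exact h1
    refine ⟨P j x₀, Q x₀ j, ?_, ?_, ?_⟩
    · have h1 := congrFun (congrFun hPP j) j
      rw [mul_apply, one_apply_eq] at h1
      simp only [hPc, ← Finset.mul_sum] at h1
      exact IsUnit.of_mul_eq_one _ h1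
    · have h1 := congrFun (congrFun hQQ2 j) j
      rw [mul_apply, one_apply_eq] at h1
      simp only [hQc, ← Finset.sum_mul] at h1
      exact IsUnit.of_mul_eq_one_right _ h1
    · rw [mul_apply]
      simp only [hPc, hQc, Finset.sum_const, Finset.card_univ, hcard]
      simp; ring
  obtain ⟨β, γ, hβ, hγ, hPQ⟩ := hPQ
  have hsum : f * c = (∑ i ∈ Finset.univ.erase j, padicValInt ℓ (d i)) + c := by
    have h1 := congrArg (padicValInt ℓ) (hdet d hD j hj)
    have hpr : ∏ i ∈ Finset.univ.erase j, d i ≠ 0 :=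
      Finset.prod_ne_zero_iff.2 fun i hi => hd0 i (Finset.ne_of_mem_erase hi)
    have hvz : (v : ℤ) ≠ 0 := by exact_mod_cast hv0
    rw [hPQ, padicValInt.mul hpr (mul_ne_zero (mul_ne_zero hβ.ne_zero hγ.ne_zero) hvz),
      padicValInt.mul (mul_ne_zero hβ.ne_zero hγ.ne_zero) hvz,
      padicValInt.mul hβ.ne_zero hγ.ne_zero,
      padicValInt.mul (mul_ne_zero hP.ne_zero (mul_ne_zero (pow_ne_zero _ ht0) (pow_ne_zero _ hu0)))
        hQ.ne_zero,
      padicValInt.mul hP.ne_zero (mul_ne_zero (pow_ne_zero _ ht0) (pow_ne_zero _ hu0)),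
      padicValInt.mul (pow_ne_zero _ ht0) (pow_ne_zero _ hu0),
      val_pow _ _ _ ht0, val_pow _ _ _ hu0, val_unit _ _ hP, val_unit _ _ hQ, val_unit _ _ hβ,
      val_unit _ _ hγ, hvt, hvu, hvv', val_prod _ _ _ fun i hi => hd0 i (Finset.ne_of_mem_erase hi)] at h1
    simpa using h1
  have hcount : ∀ n, elemDivCountSq ℓ (P * L * Q) n
      = ((Finset.univ.erase j).filter fun i => padicValInt ℓ (d i) = n).card := by
    intro n
    unfold elemDivCountSq
    rw [Nat.card_eq_fintype_card, Fintype.card_subtype]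
    congr 1
    ext i
    simp only [Finset.mem_filter, Finset.mem_univ, true_and, Finset.mem_erase, and_true, hD,
      diagonal_apply_eq]
    by_cases hij : i = j
    · subst hij; simp [hj]
    · have h1 := hd0 i hij
      rw [hdvd _ _ h1, hdvd _ _ h1]
      simp only [ne_eq, h1, hij, not_false_eq_true, true_and]
      omega
  simp only [hcount]
  have hs2 : ∑ i ∈ Finset.univ.erase j, padicValInt ℓ (d i)
      = ((Finset.univ.erase j).filter fun i => padicValInt ℓ (d i) = c).card * c := by
    rw [Finset.card_filter, Finset.sum_mul]
    refine Finset.sum_congr rfl fun i hi => ?_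
    rcases hval i (Finset.ne_of_mem_erase hi) with h1 | h1
    · rw [h1, if_neg (by omega)]; simp
    · rw [h1]; simp
  have hs3 : ((Finset.univ.erase j).filter fun i => padicValInt ℓ (d i) = 0).card
      + ((Finset.univ.erase j).filter fun i => padicValInt ℓ (d i) = c).card = f + g := by
    have h1 : (Finset.univ.erase j).card = f + g := by
      rw [Finset.card_erase_of_mem (Finset.mem_univ _), Finset.card_univ, hdeg]; omega
    rw [← h1, ← Finset.card_filter_add_card_filter_not (s := Finset.univ.erase j)
      (fun i => padicValInt ℓ (d i) = 0)]
    congr 2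
    refine Finset.filter_congr fun i hi => ?_
    have := hval i (Finset.ne_of_mem_erase hi)
    omega
  have hf : f = ((Finset.univ.erase j).filter fun i => padicValInt ℓ (d i) = c).card + 1 := by
    apply Nat.eq_of_mul_eq_mul_right hc
    rw [hsum, hs2]; ring
  refine ⟨by omega, by omega, fun n hn0 hnc => ?_⟩
  rw [Finset.card_eq_zero, Finset.filter_eq_empty_iff]
  intro i hi h1
  have := hval i (Finset.ne_of_mem_erase hi)
  omega
end

section
/- Let ℓ be a prime, n ≥ 1, and X an n×n matrix over ℤ_ℓ whose reduction mod ℓ is NOT nilpotent, such that X has exactly three distinct eigenvalues α, β, γ ∈ ℤ_ℓ (with (X − αI)(X − βI)(X − γI) = 0) and ℓ divides exactly one of them, say ℓ ∣ γ, v_ℓ(γ) = d, with γ having geometric multiplicity c as eigenvalue of X over ℚ_ℓ. Suppose further the minimal polynomial of the reduction \bar{X} divides z(z − \bar{α})(z − \bar{β}) with \bar{α}, \bar{β} ≠ 0 distinct. Then the ℓ-elementary divisors of X are ℓ^0 with multiplicity n − c and ℓ^d with multiplicity c. -/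
open Matrix Polynomial

/-- The multiplicity of `p^a` among the elementary divisors of a square matrix over `ℤ_[p]`,
read off from a diagonal form `D`: the number of nonzero diagonal entries of
valuation exactly `a`. -/
noncomputable def eCount (p : ℕ) [Fact p.Prime] {n : ℕ}
    (D : Matrix (Fin n) (Fin n) ℤ_[p]) (a : ℕ) : ℕ :=
  Nat.card {i : Fin n // D i i ≠ 0 ∧ (p : ℤ_[p]) ^ a ∣ D i i ∧ ¬ (p : ℤ_[p]) ^ (a + 1) ∣ D i i}

theorem aux_ids {A : Type*} [CommRing A] (x a b g u s : A)
    (h : (x - a) * (x - b) * (x - g) = 0) (hu : u * ((g - a) * (g - b)) = 1)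
    (hs : s * (a * b) = 1) :
    x * (s * (x ^ 2 - (a + b + g) * x + (a * b + a * g + b * g))) = g ∧
    x = x * (s * (a + b - x)) * x + g * (s * ((x - a) * (x - b))) ∧
    (1 + (g - 1) * (u * ((x - a) * (x - b)))) *
      (u * ((x - a) * (x - b)) + x * (1 - u * ((x - a) * (x - b)))) = x ∧
    (u * ((x - a) * (x - b)) + x * (1 - u * ((x - a) * (x - b)))) *
      (u * ((x - a) * (x - b)) + s * (a + b - x) * (1 - u * ((x - a) * (x - b)))) = 1 := by
  obtain ⟨Y, hY⟩ : ∃ Y, Y = (x - a) * (x - b) := ⟨_, rfl⟩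
  rw [← hY] at h ⊢
  have hxY : x * Y = g * Y := by linear_combination h
  have hYY : Y * Y = ((g - a) * (g - b)) * Y := by
    have : Y * Y = (x - a) * (x - b) * Y := by rw [← hY]
    linear_combination this + (x + g - a - b) * hxY
  obtain ⟨E, hE⟩ : ∃ E, E = u * Y := ⟨_, rfl⟩
  rw [← hE]
  have hxE : x * E = g * E := by rw [hE]; linear_combination u * hxY
  have hEE : E * E = E := by rw [hE]; linear_combination u ^ 2 * hYY + u * Y * hu
  have hYE : Y * E = Y := by rw [hE]; linear_combination u * hYY + Y * hu
  have hxZ : x * (a + b - x) = a * b - Y := by rw [hY]; ring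
  refine ⟨?_, ?_, ?_, ?_⟩
  · rw [hY] at h
    linear_combination s * h + g * hs
  · linear_combination (- x) * hs - s * x * hxZ + s * hxY
  · linear_combination (g - 1) * (1 - x) * hEE - hxE
  · linear_combination (1 - E) ^ 2 * s * hxZ + hs * (1 - E) ^ 2 + (2 - x - s * (a + b - x)) * hEE
      + 0 * hxE + s * (1 - E) * hYE

theorem aux_mat {R : Type*} [CommRing R] {n : ℕ} (X : Matrix (Fin n) (Fin n) R) (a b g u s : R)
    (h : (X - a • 1) * (X - b • 1) * (X - g • 1) = 0) (hu : u * ((g - a) * (g - b)) = 1)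
    (hs : s * (a * b) = 1) :
    (∃ W, X * W = g • 1) ∧ (∃ Z T, X = X * Z * X + g • T) ∧
    ∃ H H', (1 + (g - 1) • (u • ((X - a • 1) * (X - b • 1)))) * H = X ∧ H * H' = 1 := by
  let F : R[X] := (Polynomial.X - C a) * (Polynomial.X - C b) * (Polynomial.X - C g)
  let I := Ideal.span {F}
  have hI : ∀ q ∈ I, (aeval (R := R) X).toRingHom q = 0 := by
    intro q hq
    obtain ⟨k, rfl⟩ := Ideal.mem_span_singleton.1 hq
    have : aeval X F = 0 := by
      simpa [F, Algebra.algebraMap_eq_smul_one] using h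
    show aeval X (F * k) = 0
    rw [map_mul, this, zero_mul]
  let ψ : R[X] ⧸ I →+* Matrix (Fin n) (Fin n) R := Ideal.Quotient.lift I _ hI
  let q := Ideal.Quotient.mk I
  have hψ : ∀ f, ψ (q f) = aeval X f := fun f => rfl
  have hψC : ∀ r, ψ (q (C r)) = r • 1 := fun r => by
    rw [hψ, aeval_C, Algebra.algebraMap_eq_smul_one]
  have hψX : ψ (q Polynomial.X) = X := by rw [hψ, aeval_X]
  obtain ⟨h1, h2, h3, h4⟩ := aux_ids (q Polynomial.X) (q (C a)) (q (C b)) (q (C g)) (q (C u))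
    (q (C s)) (by
      simp only [← map_sub, ← map_mul]
      exact Ideal.Quotient.eq_zero_iff_mem.2 (Ideal.mem_span_singleton_self F))
    (by simp only [← map_sub, ← map_mul, hu, map_one])
    (by simp only [← map_mul, hs, map_one])
  have k1 := congrArg ψ h1
  rw [map_mul, hψC, hψX] at k1
  have k2 := congrArg ψ h2
  rw [map_add, map_mul, map_mul, map_mul ψ (q (C g)), hψC, hψX, smul_one_mul] at k2
  have k3 := congrArg ψ h3
  have k4 := congrArg ψ h4
  rw [map_mul, hψX] at k3
  rw [map_mul, map_one] at k4
  refine ⟨⟨_, k1⟩, ⟨_, _, k2⟩, _, _, ?_, k4⟩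
  convert k3 using 2
  simp only [map_add, map_mul, map_sub, map_one, hψC, hψX]
  simp only [sub_mul, smul_one_mul, one_mul, sub_smul, one_smul]

theorem aux_det {K : Type*} [Field K] {n : ℕ} (X : Matrix (Fin n) (Fin n) K) (a b g u : K)
    (h : (X - a • 1) * (X - b • 1) * (X - g • 1) = 0) (hu : u * ((g - a) * (g - b)) = 1) :
    (1 + (g - 1) • (u • ((X - a • 1) * (X - b • 1)))).det =
      g ^ Module.finrank K (LinearMap.ker
        (X.mulVecLin - g • (LinearMap.id : (Fin n → K) →ₗ[K] (Fin n → K)))) := by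
  set W := LinearMap.ker (X.mulVecLin - g • (LinearMap.id : (Fin n → K) →ₗ[K] (Fin n → K))) with hW
  have hcomm : (X - g • 1) * ((X - a • 1) * (X - b • 1)) = 0 := by
    have key : ∀ a b : K, (X - a • 1) * (X - b • 1) = (X - b • 1) * (X - a • 1) := by
      intro a b
      simp only [mul_sub, sub_mul, smul_mul_assoc, one_mul, mul_smul_comm, mul_one]
      simp only [smul_sub]
      rw [smul_comm a b]; abel
    rw [← h, ← mul_assoc, key g a, mul_assoc, key g b, mul_assoc]
  have hmem : ∀ v, v ∈ W ↔ X *ᵥ v = g • v := by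
    intro v; simp [hW, sub_eq_zero]
  set f := Matrix.toLin' (1 + (g - 1) • (u • ((X - a • 1) * (X - b • 1)))) with hf
  have hfv : ∀ v, f v = v + (g - 1) • (u • (((X - a • 1) * (X - b • 1)) *ᵥ v)) := by
    intro v; rw [hf, Matrix.toLin'_apply, Matrix.add_mulVec, Matrix.smul_mulVec, Matrix.smul_mulVec,
      Matrix.one_mulVec]
  have hYW : ∀ v, (((X - a • 1) * (X - b • 1)) *ᵥ v) ∈ W := by
    intro v
    rw [hmem]
    have := congrArg (fun M => M *ᵥ v) hcomm
    simp only [← Matrix.mulVec_mulVec, Matrix.zero_mulVec] at this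
    rw [Matrix.sub_mulVec, sub_eq_zero] at this
    simpa [← Matrix.mulVec_mulVec, Matrix.smul_mulVec] using this
  have hfW : ∀ v ∈ W, f v = g • v := by
    intro v hv
    rw [hmem] at hv
    rw [hfv, ← Matrix.mulVec_mulVec]
    have : (X - b • 1) *ᵥ v = (g - b) • v := by
      simp [Matrix.sub_mulVec, Matrix.smul_mulVec, hv, sub_smul]
    rw [this, Matrix.mulVec_smul]
    have : (X - a • 1) *ᵥ v = (g - a) • v := by
      simp [Matrix.sub_mulVec, Matrix.smul_mulVec, hv, sub_smul]
    rw [this]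
    simp only [smul_smul]
    rw [show (g - 1) * (u * ((g - b) * (g - a))) = g - 1 by linear_combination (g-1) * hu]
    rw [sub_smul]; simp
  have hWf : W ≤ W.comap f := fun v hv => by
    rw [Submodule.mem_comap, hfW v hv]; exact W.smul_mem _ hv
  rw [← LinearMap.det_toLin', ← hf, LinearMap.det_eq_det_mul_det W f hWf]
  have e1 : f.restrict (p := W) (q := W) hWf = g • LinearMap.id := by
    ext v : 2; exact hfW v v.2
  have e2 : W.mapQ W f hWf = LinearMap.id := by
    apply LinearMap.ext
    intro w
    obtain ⟨v, rfl⟩ := W.mkQ_surjective w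
    simp only [Submodule.mkQ_apply, Submodule.mapQ_apply, LinearMap.id_apply]
    rw [Submodule.Quotient.eq, hfv]
    simpa using W.smul_mem _ (W.smul_mem _ (hYW v))
  rw [e1, e2]
  simp

theorem stmt19 (p n : ℕ) [Fact p.Prime] (hn : 1 ≤ n)
    (X : Matrix (Fin n) (Fin n) ℤ_[p])
    (hnotnil : ¬ IsNilpotent (X.map (fun x => PadicInt.toZMod x)))
    (α β γ : ℤ_[p]) (hab : α ≠ β) (hag : α ≠ γ) (hbg : β ≠ γ)
    (hvanish : (X - α • 1) * (X - β • 1) * (X - γ • 1) = 0)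
    (hpa : ¬ (p : ℤ_[p]) ∣ α) (hpb : ¬ (p : ℤ_[p]) ∣ β) (hpg : (p : ℤ_[p]) ∣ γ)
    (d : ℕ) (hd1 : (p : ℤ_[p]) ^ d ∣ γ) (hd2 : ¬ (p : ℤ_[p]) ^ (d + 1) ∣ γ)
    (c : ℕ)
    (hc : c = Module.finrank ℚ_[p] (LinearMap.ker
        ((X.map (fun x : ℤ_[p] => (x : ℚ_[p]))).mulVecLin
          - (γ : ℚ_[p]) • (LinearMap.id : (Fin n → ℚ_[p]) →ₗ[ℚ_[p]] (Fin n → ℚ_[p])))))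
    (hmin : minpoly (ZMod p) (X.map (fun x => PadicInt.toZMod x))
      ∣ Polynomial.X * (Polynomial.X - C (PadicInt.toZMod α))
          * (Polynomial.X - C (PadicInt.toZMod β)))
    (hα0 : PadicInt.toZMod α ≠ 0) (hβ0 : PadicInt.toZMod β ≠ 0)
    (hαβ : PadicInt.toZMod α ≠ PadicInt.toZMod β)
    (P Q : Matrix (Fin n) (Fin n) ℤ_[p]) (hP : IsUnit P.det) (hQ : IsUnit Q.det)
    (hdiag : ∀ i j, i ≠ j → (P * X * Q) i j = 0) :
    eCount p (P * X * Q) 0 = n - c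
    ∧ eCount p (P * X * Q) d = c
    ∧ ∀ j : ℕ, j ≠ 0 → j ≠ d → eCount p (P * X * Q) j = 0 := by
  classical
  have hunit : ∀ x : ℤ_[p], IsUnit x ↔ ¬ (p : ℤ_[p]) ∣ x := by
    intro x; rw [← PadicInt.norm_lt_one_iff_dvd, ← PadicInt.not_isUnit_iff, not_not]
  have hpp : Prime (p : ℤ_[p]) := PadicInt.prime_p
  have hua : IsUnit ((γ - α) * (γ - β)) := by
    refine IsUnit.mul ?_ ?_ <;> rw [hunit]
    · exact fun h => hpa ((dvd_sub_right hpg).1 h)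
    · exact fun h => hpb ((dvd_sub_right hpg).1 h)
  have hub : IsUnit (α * β) := ((hunit α).2 hpa).mul ((hunit β).2 hpb)
  obtain ⟨u, hu⟩ := hua.exists_left_inv
  obtain ⟨s, hs⟩ := hub.exists_left_inv
  obtain ⟨⟨W, hW⟩, ⟨Z, T, hZT⟩, H, H', hGH, hHH⟩ := aux_mat X α β γ u s hvanish hu hs
  have hd0 : d ≠ 0 := by rintro rfl; exact hd2 (by simpa using hpg)
  -- inverse matrices
  have hPi : P⁻¹ * P = 1 := Matrix.nonsing_inv_mul P hP
  have hPi2 : P * P⁻¹ = 1 := Matrix.mul_nonsing_inv P hP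
  have hQi : Q * Q⁻¹ = 1 := Matrix.mul_nonsing_inv Q hQ
  obtain ⟨D, hD⟩ : ∃ D, D = P * X * Q := ⟨_, rfl⟩
  rw [← hD] at hdiag ⊢
  have hDd : D = Matrix.diagonal (fun i => D i i) := by
    ext i j
    by_cases hij : i = j
    · subst hij; simp
    · rw [hdiag i j hij, Matrix.diagonal_apply_ne _ hij]
  have hγd : Associated γ ((p : ℤ_[p]) ^ d) := by
    obtain ⟨w, hw⟩ := hd1
    have : IsUnit w := by
      rw [hunit]; rintro ⟨t, rfl⟩; exact hd2 ⟨t, by rw [hw]; ring⟩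
    rw [hw]
    exact (associated_mul_unit_left _ _ this)
  have hdvd : ∀ i, D i i ∣ (p : ℤ_[p]) ^ d := by
    intro i
    refine dvd_trans ?_ hγd.dvd
    have : D * (Q⁻¹ * W * P⁻¹) = γ • 1 := by
      calc D * (Q⁻¹ * W * P⁻¹) = P * (X * ((Q * Q⁻¹) * W)) * P⁻¹ := by
            rw [hD]; simp only [Matrix.mul_assoc]
        _ = γ • 1 := by rw [hQi, Matrix.one_mul, hW]; simp [hPi2]
    have h2 := congrFun (congrFun this i) i
    rw [hDd, Matrix.diagonal_mul] at h2
    exact ⟨_, by simpa using h2.symm⟩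
  have hor : ∀ i, (p : ℤ_[p]) ∣ D i i → (p : ℤ_[p]) ^ d ∣ D i i := by
    intro i hi
    have h1 : D = D * (Q⁻¹ * Z * P⁻¹) * D + γ • (P * T * Q) := by
      calc D = P * (X * Z * X + γ • T) * Q := by rw [← hZT, hD]
        _ = P * X * (Q * Q⁻¹) * Z * (P⁻¹ * P) * X * Q + γ • (P * T * Q) := by
            rw [hQi, hPi]; simp [Matrix.mul_add, Matrix.add_mul, Matrix.mul_assoc]
        _ = _ := by rw [hD]; simp only [Matrix.mul_assoc]
    have h2 := congrFun (congrFun h1 i) i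
    generalize Q⁻¹ * Z * P⁻¹ = M at h2
    have h3 : (D * M * D) i i = D i i * M i i * D i i := by
      rw [hDd, Matrix.mul_diagonal, Matrix.diagonal_mul]; simp
    rw [Matrix.add_apply, h3, Matrix.smul_apply, smul_eq_mul] at h2
    have h4 : IsUnit (1 - M i i * D i i) := by
      rw [hunit]
      intro h
      have h5 := (dvd_sub_left (hi.mul_left (M i i))).1 h
      exact hpp.not_isUnit (isUnit_of_dvd_one h5)
    have h5 : (p : ℤ_[p]) ^ d ∣ D i i * (1 - M i i * D i i) := by
      refine hd1.trans ⟨(P * T * Q) i i, ?_⟩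
      linear_combination h2
    exact (h4.dvd_mul_right).1 h5
  set S := Finset.univ.filter (fun i => (p : ℤ_[p]) ∣ D i i) with hS
  have hass : ∀ i ∈ S, Associated (D i i) ((p : ℤ_[p]) ^ d) := fun i hi =>
    associated_of_dvd_dvd (hdvd i) (hor i (by simpa [hS] using hi))
  have hne : ∀ i, D i i ≠ 0 := fun i h => by
    have := hdvd i
    rw [h, zero_dvd_iff] at this
    exact pow_ne_zero d hpp.ne_zero this
  -- determinants
  have hdetD : Associated D.det ((p : ℤ_[p]) ^ (d * S.card)) := by
    have h1 : D.det = ∏ i, D i i := by rw [hDd, Matrix.det_diagonal]; simp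
    rw [h1, ← Finset.prod_filter_mul_prod_filter_not Finset.univ (fun i => (p : ℤ_[p]) ∣ D i i)]
    have h2 : IsUnit (∏ i with ¬ (p : ℤ_[p]) ∣ D i i, D i i) :=
      IsUnit.prod_iff.2 (fun i hi => (hunit _).2 (by simpa using hi))
    refine (associated_mul_unit_left _ _ h2).trans ?_
    rw [pow_mul, ← Finset.prod_const]
    exact Associated.prod S _ _ hass
  have hdetX : Associated X.det ((p : ℤ_[p]) ^ (d * c)) := by
    have hHu : IsUnit H.det := by
      have := congrArg Matrix.det hHH
      rw [Matrix.det_mul, Matrix.det_one] at this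
      exact IsUnit.of_mul_eq_one _ this
    rw [← hGH, Matrix.det_mul, pow_mul]
    refine (associated_mul_unit_left _ _ hHu).trans ?_
    have hG : (1 + (γ - 1) • (u • ((X - α • 1) * (X - β • 1)))).det = γ ^ c := by
      let φ : ℤ_[p] →+* ℚ_[p] := PadicInt.Coe.ringHom
      have hφ : Function.Injective φ := Subtype.coe_injective
      apply hφ
      rw [RingHom.map_det, map_pow, hc]
      have hm : ∀ r : ℤ_[p], φ.mapMatrix (r • (1 : Matrix (Fin n) (Fin n) ℤ_[p])) = φ r • 1 := by
        intro r; ext i j; by_cases hij : i = j <;> simp [Matrix.one_apply, hij]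
      have hm2 : ∀ (r : ℤ_[p]) (M : Matrix (Fin n) (Fin n) ℤ_[p]),
          φ.mapMatrix (r • M) = φ r • φ.mapMatrix M := by
        intro r M; ext i j; simp
      have h0 := congrArg φ.mapMatrix hvanish
      have hu' := congrArg φ hu
      simp only [map_mul, map_sub, map_one, map_zero, hm] at h0 hu'
      have h1 := aux_det _ _ _ _ _ h0 hu'
      simp only [map_add, hm2, map_mul, map_sub, map_one]
      exact h1
    rw [hG]
    exact hγd.pow_pow
  have hcard : S.card = c := by
    have h1 : Associated D.det X.det := by
      rw [hD, Matrix.det_mul, Matrix.det_mul]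
      exact (associated_mul_unit_left _ _ hQ).trans (associated_unit_mul_left _ _ hP)
    have h2 := (hdetD.symm.trans h1).trans hdetX
    have h3 : d * S.card = d * c := by
      apply le_antisymm
      · exact (pow_dvd_pow_iff hpp.ne_zero hpp.not_isUnit).1 h2.dvd
      · exact (pow_dvd_pow_iff hpp.ne_zero hpp.not_isUnit).1 h2.symm.dvd
    exact Nat.eq_of_mul_eq_mul_left (Nat.pos_of_ne_zero hd0) h3
  have hcnt : ∀ (a : ℕ) (i : Fin n), (D i i ≠ 0 ∧ (p : ℤ_[p]) ^ a ∣ D i i ∧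
      ¬ (p : ℤ_[p]) ^ (a + 1) ∣ D i i) ↔ (i ∈ S ∧ a = d) ∨ (i ∉ S ∧ a = 0) := by
    intro a i
    by_cases hi : i ∈ S
    · rw [(hass i hi).dvd_iff_dvd_right, (hass i hi).dvd_iff_dvd_right,
        pow_dvd_pow_iff hpp.ne_zero hpp.not_isUnit, pow_dvd_pow_iff hpp.ne_zero hpp.not_isUnit]
      simp only [hi, hne i, true_and, not_true, false_and, or_false, ne_eq, not_false_eq_true]
      omega
    · have hi' : ¬ (p : ℤ_[p]) ∣ D i i := by simpa [hS] using hi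
      simp only [hi, hne i, true_and, not_true, false_and, false_or, ne_eq, not_false_eq_true]
      constructor
      · rintro ⟨h, -⟩
        by_contra ha
        exact hi' ((dvd_pow_self _ ha).trans h)
      · rintro rfl
        simpa using hi'
  have hE : ∀ a, eCount p D a =
      (Finset.univ.filter (fun i => (i ∈ S ∧ a = d) ∨ (i ∉ S ∧ a = 0))).card := by
    intro a
    unfold eCount
    rw [Nat.card_congr (Equiv.subtypeEquivRight (hcnt a)), Nat.card_eq_fintype_card,
      Fintype.card_subtype]
  refine ⟨?_, ?_, ?_⟩
  · rw [hE, ← hcard]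
    have : (Finset.univ.filter (fun i => (i ∈ S ∧ 0 = d) ∨ (i ∉ S ∧ 0 = 0))) = Sᶜ := by
      ext i; simp [hd0.symm]
    rw [this, Finset.card_compl, Fintype.card_fin]
  · rw [hE, ← hcard]
    congr 1
    ext i; simp [hd0]
  · intro j hj0 hjd
    rw [hE]
    simp [hj0, hjd]
end
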